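/- Let C ⊆ V be a set of controllable vertices. If a vertex v ∈ N(C) is alone in its C-equivalence class (i.e. no other vertex of N(C) is C-equivalent to v), then v is controllable. -/

import Mathlib

/-!
Let `L` be the space of vectors `g = (g_v)` of real polynomials with `∑_v g_v(q_v) ∂_{p_v} ∈ 𝓜`.
The double bracket `[[g ∂_p, X₀], h ∂_p]` equals `(g h)' ∂_p`, so `L` is closed under
`(g, h) ↦ (g h)'`. For a controllable `c`, the bracket `[∂_{q_c}, X₀]` gives
`∑_{w ~ c} V''_{wc}(q_w - q_c) ∂_{p_w} ∈ 𝓜` modulo `∂_{p_c}`; bracketing with `∂_{q_c}` and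
Taylor's formula eliminate `q_c`, so that `L` contains the vector `F_c = (V''_{wc})_{w ~ c}` and
all its derivatives.

The functions `a` on the vertices with `a L ⊆ L` form an algebra. Call two vertices unseparated if
every such `a` takes the same value at both. By a finite Stone–Weierstrass theorem the indicator
functions of the unseparated classes belong to the algebra, so `F = F_c` can be restricted to one
class. Unless the restriction vanishes, its maximal degree `D` is positive and its derivative of
order `D - 1` is a vector `g` of affine polynomials. The eigenspaces of `h ↦ (g h)'` separate the
components by slope, so all slopes on the class are equal and `X - r ∈ L` there, with `r` the
vector of roots. The operator `h ↦ ((X - r) h)'` multiplies the order-`k` Taylor term around `r` by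
`k + 1`, so `L` contains the Taylor terms of `F` one by one. Hence multiplication by the Taylor
coefficients preserves `L`, these are constant on the class, and the components of `F` are
translates of one another.

Applied to all `c ∈ C`, this shows that unseparated vertices outside `C` are `C`-equivalent. As
`∂_{p_c} ∈ 𝓜` for `c ∈ C`, the components in `C` can be removed from the elements of `L`. So if `v`
is alone in its `C`-equivalence class, then `∂_{p_v} ∈ 𝓜`, and
`[∂_{p_v}, X₀] = ∂_{q_v} - γ_v ∂_{p_v}` gives `∂_{q_v} ∈ 𝓜`.
-/

open scoped Classical
open Polynomial

noncomputable section

/-- Phase space ℝ^{2|V|}: positions `q = x.1` and momenta `p = x.2`. -/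
abbrev Phase (V : Type) := (V → ℝ) × (V → ℝ)

/-- Lie bracket of vector fields: `[Y,Z](x) = DZ(x)·Y(x) − DY(x)·Z(x)`. -/
def lieB {V : Type} [Fintype V] (Y Z : Phase V → Phase V) : Phase V → Phase V :=
  fun x => fderiv ℝ Z x (Y x) - fderiv ℝ Y x (Z x)

/-- The constant vector field `∂_{p_v}`. -/
def dp {V : Type} [Fintype V] [DecidableEq V] (v : V) : Phase V → Phase V :=
  fun _ => (0, Pi.single v 1)

/-- The constant vector field `∂_{q_v}`. -/
def dq {V : Type} [Fintype V] [DecidableEq V] (v : V) : Phase V → Phase V :=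
  fun _ => (Pi.single v 1, 0)

/-- The constant vector field `∑_{v ∈ A} ∂_{p_v}`. -/
def dpSum {V : Type} [Fintype V] [DecidableEq V] (A : Finset V) : Phase V → Phase V :=
  fun _ => (0, ∑ v ∈ A, Pi.single v 1)

/-- The constant vector field `∑_{v ∈ A} ∂_{q_v}`. -/
def dqSum {V : Type} [Fintype V] [DecidableEq V] (A : Finset V) : Phase V → Phase V :=
  fun _ => (∑ v ∈ A, Pi.single v 1, 0)

/-- The drift vector field
`X₀ = −∑_{v∈V*} γ_v p_v ∂_{p_v} + ∑_{v∈V} (p_v ∂_{q_v} − U_v'(q_v) ∂_{p_v})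
      − ∑_{{u,v}∈E} V_{uv}'(q_u − q_v)(∂_{p_u} − ∂_{p_v})`,
written componentwise (using the symmetry `V_{vu}(x) = V_{uv}(−x)` of the
interaction potentials, the `∂_{p_v}`-component of the edge term at a vertex `v` is
`−∑_{w ~ v} V_{vw}'(q_v − q_w)`). -/
def X0 {V : Type} [Fintype V] [DecidableEq V] (G : SimpleGraph V) [DecidableRel G.Adj]
    (γ : V → ℝ) (U : V → ℝ → ℝ) (Vp : V → V → Polynomial ℝ) : Phase V → Phase V :=
  fun x =>
    (x.2, fun v =>
      -(γ v) * x.2 v - deriv (U v) (x.1 v) -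
        ∑ w ∈ Finset.univ.filter (fun w => G.Adj v w),
          (derivative (Vp v w)).eval (x.1 v - x.1 w))

/-- The smallest collection `𝓜` of vector fields on `ℝ^{2|V|}` that contains `∂_{p_v}`
for every `v ∈ V*`, and is closed under linear combinations, Lie brackets,
bracketing with `X₀`, and multiplication by smooth scalar functions. -/
inductive MM {V : Type} [Fintype V] [DecidableEq V] (Vstar : Finset V)
    (X₀ : Phase V → Phase V) : (Phase V → Phase V) → Prop
  | basic (v : V) (hv : v ∈ Vstar) : MM Vstar X₀ (dp v)
  | add {Y Z : Phase V → Phase V} : MM Vstar X₀ Y → MM Vstar X₀ Z → MM Vstar X₀ (Y + Z)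
  | smul (a : ℝ) {Y : Phase V → Phase V} : MM Vstar X₀ Y → MM Vstar X₀ (a • Y)
  | lie {Y Z : Phase V → Phase V} : MM Vstar X₀ Y → MM Vstar X₀ Z → MM Vstar X₀ (lieB Y Z)
  | lieX {Y : Phase V → Phase V} : MM Vstar X₀ Y → MM Vstar X₀ (lieB Y X₀)
  | mulS (f : Phase V → ℝ) (hf : ContDiff ℝ (⊤ : ℕ∞) f) {Y : Phase V → Phase V} :
      MM Vstar X₀ Y → MM Vstar X₀ (fun x => f x • Y x)

/-- A vertex `v` is controllable if `∂_{q_v} ∈ 𝓜` and `∂_{p_v} ∈ 𝓜`. -/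
def Controllable {V : Type} [Fintype V] [DecidableEq V] (Vstar : Finset V)
    (X₀ : Phase V → Phase V) (v : V) : Prop :=
  MM Vstar X₀ (dq v) ∧ MM Vstar X₀ (dp v)

/-- Two polynomials are equivalent if `f(·) = g(· + δ)` for some `δ ∈ ℝ`. -/
def PolyEquiv (f g : Polynomial ℝ) : Prop :=
  ∃ δ : ℝ, ∀ x : ℝ, f.eval x = g.eval (x + δ)

/-- `N(C)`: the set of vertices not in `C` having at least one neighbor in `C`. -/
def NC {V : Type} [Fintype V] [DecidableEq V] (G : SimpleGraph V) [DecidableRel G.Adj]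
    (C : Finset V) : Finset V :=
  Finset.univ.filter fun v => v ∉ C ∧ ∃ c ∈ C, G.Adj c v

/-- `v` and `w` are `C`-equivalent: they are `C`-siblings (connected to `C` in exactly
the same way) and for each `c ∈ C` adjacent to both, the polynomials `V''_{cv}` and
`V''_{cw}` are equivalent. -/
def CEquiv {V : Type} (G : SimpleGraph V) (Vp : V → V → Polynomial ℝ) (C : Finset V)
    (v w : V) : Prop :=
  (∀ c ∈ C, G.Adj c v ↔ G.Adj c w) ∧
  (∀ c ∈ C, G.Adj c v → G.Adj c w →
    PolyEquiv (derivative (derivative (Vp c v))) (derivative (derivative (Vp c w))))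

/-! ### Multipliers of spaces of polynomial vectors -/

section CommRing

variable {R ι : Type*} [CommRing R]

theorem aeval_apply_mem_of_forall_apply_mem {M : Type*} [AddCommGroup M] [Module R M]
    {N : Submodule R M} {T : Module.End R M} (hT : ∀ y ∈ N, T y ∈ N) (p : R[X]) {y : M}
    (hy : y ∈ N) : aeval T p y ∈ N := by
  induction p using Polynomial.induction_on' with
  | add p q hp hq => simpa using N.add_mem hp hq
  | monomial n a =>
    have hpow : (T ^ n) y ∈ N := by
      induction n with
      | zero => simpa using hy
      | succ n ih => rw [pow_succ']; exact hT _ ih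
    simpa [aeval_monomial] using N.smul_mem a hpow

/-- Indices that no element of an algebra of functions separates. -/
def Unseparated (A : Subalgebra R (ι → R)) (v w : ι) : Prop :=
  ∀ a ∈ A, a v = a w

theorem Unseparated.symm {A : Subalgebra R (ι → R)} {v w : ι} (h : Unseparated A v w) :
    Unseparated A w v :=
  fun a ha => (h a ha).symm

theorem Unseparated.trans {A : Subalgebra R (ι → R)} {u v w : ι} (h : Unseparated A u v)
    (h' : Unseparated A v w) : Unseparated A u w :=
  fun a ha => (h a ha).trans (h' a ha)

/-- The algebra of scalar functions on the index set whose componentwise multiplication maps `L`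
into itself. -/
def multipliers (L : Submodule R (ι → R[X])) : Subalgebra R (ι → R) where
  carrier := {a | ∀ h ∈ L, a • h ∈ L}
  mul_mem' ha hb h hh := by simpa only [mul_smul] using ha _ (hb h hh)
  add_mem' ha hb h hh := by simpa only [add_smul] using L.add_mem (ha h hh) (hb h hh)
  algebraMap_mem' c h hh := by simpa only [algebraMap_smul] using L.smul_mem c hh

/-- The componentwise derivative of a vector of polynomials. -/
def vderiv : (ι → R[X]) →ₗ[R] (ι → R[X]) :=
  (derivative : R[X] →ₗ[R] R[X]).compLeft ι

@[simp]
theorem vderiv_apply (h : ι → R[X]) (i : ι) : vderiv h i = derivative (h i) :=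
  rfl

@[simp]
theorem vderiv_iterate_apply (k : ℕ) (h : ι → R[X]) (i : ι) :
    vderiv^[k] h i = derivative^[k] (h i) := by
  induction k generalizing h with
  | zero => rfl
  | succ k ih => simp [ih]

theorem vderiv_iterate_smul (k : ℕ) (a : ι → R) (h : ι → R[X]) :
    vderiv^[k] (a • h) = a • vderiv^[k] h := by
  ext1 i
  simp [iterate_derivative_smul]

/-- Closure of a space of polynomial vectors under the product `(g, h) ↦ (g h)'`, which is what
iterated brackets with the drift produce on momentum fields. -/
def DerivMulClosed (L : Submodule R (ι → R[X])) : Prop :=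
  ∀ g ∈ L, ∀ h ∈ L, vderiv (g * h) ∈ L

/-- The vector of linear polynomials with roots `r`. -/
def linearVec (r : ι → R) : ι → R[X] :=
  fun i => X - C (r i)

theorem vderiv_smul_linearVec_pow_mul (r a b : ι → R) (j k : ℕ) :
    vderiv ((a • linearVec r ^ (j + 1)) * (b • linearVec r ^ k)) =
      ((j + k : ℕ) + 1 : R) • ((a * b) • linearVec r ^ (j + k)) := by
  ext1 i
  have hpow : (a i • (X - C (r i)) ^ (j + 1)) * (b i • (X - C (r i)) ^ k) =
      (a i * b i) • (X - C (r i)) ^ (j + k + 1) := by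
    rw [smul_mul_smul_comm, ← pow_add, add_right_comm]
  simp only [vderiv_apply, Pi.mul_apply, Pi.smul_apply, Pi.smul_apply', Pi.pow_apply, linearVec,
    hpow, derivative_smul, derivative_X_sub_C_pow]
  simp only [add_tsub_cancel_right, smul_eq_C_mul]
  push_cast [C_add, C_mul]
  ring

/-- The coefficients of order `k` of the Taylor expansions of the components of `h` at `r`. -/
def taylorCoeffVec (r : ι → R) (h : ι → R[X]) (k : ℕ) : ι → R :=
  fun i => (taylor (r i) (h i)).coeff k

theorem eventually_eq_sum_taylorCoeffVec [Finite ι] (r : ι → R) (h : ι → R[X]) :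
    ∀ᶠ N in Filter.atTop,
      h = ∑ k ∈ Finset.range N, taylorCoeffVec r h k • linearVec r ^ k := by
  obtain ⟨M, hM⟩ := Finite.exists_le fun i => (h i).natDegree
  filter_upwards [Filter.eventually_gt_atTop M] with N hN
  ext1 i
  have hdeg : (taylor (r i) (h i)).natDegree < N := by
    rw [natDegree_taylor]
    exact (hM i).trans_lt hN
  conv_lhs => rw [← sum_taylor_eq (h i) (r i), sum_over_range' _ (by simp) N hdeg]
  simp [taylorCoeffVec, linearVec, Finset.sum_apply, smul_eq_C_mul]

theorem iterate_derivative_taylor (s : R) (f : R[X]) (n : ℕ) :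
    derivative^[n] (taylor s f) = taylor s (derivative^[n] f) := by
  induction n with
  | zero => rfl
  | succ n ih =>
    rw [Function.iterate_succ_apply', ih, Function.iterate_succ_apply']
    simp [taylor_apply, derivative_comp]

theorem indicator_one_mul_self {S : Set ι} :
    (S.indicator 1 : ι → R) * S.indicator 1 = S.indicator 1 := by
  rw [← Set.inter_indicator_one, Set.inter_self]

end CommRing

section Field

variable {𝕜 ι : Type*} [Field 𝕜]

/-- Lagrange interpolation at the eigenvalues turns `T` into the projection onto each summand. -/
theorem mem_of_sum_eigenvectors_mem {M κ : Type*} [AddCommGroup M] [Module 𝕜 M]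
    {N : Submodule 𝕜 M} {T : Module.End 𝕜 M} (hT : ∀ y ∈ N, T y ∈ N) {s : Finset κ} {μ : κ → 𝕜}
    (hμ : Set.InjOn μ s) {x : κ → M} (hx : ∀ i ∈ s, T (x i) = μ i • x i)
    (hsum : ∑ i ∈ s, x i ∈ N) {i : κ} (hi : i ∈ s) : x i ∈ N := by
  have hproj : ∀ j ∈ s, aeval T (Lagrange.basis s μ i) (x j) = if j = i then x j else 0 := by
    intro j hj
    rw [Module.End.aeval_apply_of_mem_apply_eq_smul (hx j hj)]
    split_ifs with hji
    · rw [hji, Lagrange.eval_basis_self hμ hi, one_smul]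
    · rw [Lagrange.eval_basis_of_ne (Ne.symm hji) hj, zero_smul]
  have hmem := aeval_apply_mem_of_forall_apply_mem hT (Lagrange.basis s μ i) hsum
  rwa [map_sum, Finset.sum_congr rfl hproj, Finset.sum_ite_eq' s, if_pos hi] at hmem

theorem exists_mem_eq_one_eq_zero {A : Subalgebra 𝕜 (ι → 𝕜)} {v w : ι}
    (h : ¬ Unseparated A v w) : ∃ a ∈ A, a v = 1 ∧ a w = 0 := by
  obtain ⟨a, ha, hne⟩ : ∃ a ∈ A, a v ≠ a w := by simpa [Unseparated] using h
  refine ⟨(a v - a w)⁻¹ • (a - algebraMap 𝕜 _ (a w)),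
    A.smul_mem (A.sub_mem ha (A.algebraMap_mem _)) _, ?_, by simp⟩
  simp [inv_mul_cancel₀ (sub_ne_zero.2 hne)]

/-- A finite Stone–Weierstrass theorem. With `a v w ∈ A` equal to `1` at `v` and to `0` at `w`, the
indicator function is `1 - ∏ v ∈ S, (1 - ∏ w ∉ S, a v w)`. -/
theorem indicator_one_mem_of_unseparated_closed [Finite ι] {A : Subalgebra 𝕜 (ι → 𝕜)} {S : Set ι}
    (hS : ∀ v ∈ S, ∀ w, Unseparated A v w → w ∈ S) : S.indicator 1 ∈ A := by
  have := Fintype.ofFinite ι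
  have hsep : ∀ v w, ∃ a ∈ A, v ∈ S → w ∉ S → a v = 1 ∧ a w = 0 := by
    intro v w
    by_cases h : v ∈ S ∧ w ∉ S
    · obtain ⟨a, ha, hvw⟩ := exists_mem_eq_one_eq_zero fun h' => h.2 (hS v h.1 w h')
      exact ⟨a, ha, fun _ _ => hvw⟩
    · exact ⟨0, A.zero_mem, fun hv hw => absurd ⟨hv, hw⟩ h⟩
  choose a haA ha using hsep
  have hmem : 1 - ∏ v ∈ S.toFinset, (1 - ∏ w ∈ Sᶜ.toFinset, a v w) ∈ A :=
    A.sub_mem A.one_mem (A.prod_mem fun v _ =>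
      A.sub_mem A.one_mem (A.prod_mem fun w _ => haA v w))
  convert hmem using 1
  ext u
  simp only [Pi.sub_apply, Pi.one_apply, Finset.prod_apply]
  by_cases hu : u ∈ S
  · rw [Set.indicator_of_mem hu, Finset.prod_eq_zero (Set.mem_toFinset.2 hu), sub_zero,
      Pi.one_apply]
    exact sub_eq_zero.2 (Finset.prod_eq_one fun w hw => (ha u w hu (by simpa using hw)).1).symm
  · rw [Set.indicator_of_notMem hu, Finset.prod_eq_one, sub_self]
    intro v hv
    exact sub_eq_self.2 (Finset.prod_eq_zero (Set.mem_toFinset.2 (Set.mem_compl hu))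
      (ha v u (Set.mem_toFinset.1 hv) hu).2)

theorem indicator_smul_one_mem {L : Submodule 𝕜 (ι → 𝕜[X])} {S : Set ι}
    (hS : S.indicator 1 ∈ multipliers L) {h : ι → 𝕜[X]} (hh : h ∈ L) {c : 𝕜} (hc : c ≠ 0)
    (hconst : ∀ u ∈ S, h u = C c) : (S.indicator 1 : ι → 𝕜) • (1 : ι → 𝕜[X]) ∈ L := by
  rw [← L.smul_mem_iff hc]
  convert hS _ hh using 1
  ext1 u
  by_cases hu : u ∈ S
  · simp [hu, hconst u hu, smul_eq_C_mul]
  · simp [hu]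

section CharZero

variable [CharZero 𝕜] {L : Submodule 𝕜 (ι → 𝕜[X])} {r a e : ι → 𝕜}

theorem DerivMulClosed.smul_linearVec_pow_mem (hL : DerivMulClosed L) {b : ι → 𝕜} {j k : ℕ}
    (ha : a • linearVec r ^ (j + 1) ∈ L) (hb : b • linearVec r ^ k ∈ L) :
    (a * b) • linearVec r ^ (j + k) ∈ L := by
  have hne : ((j + k : ℕ) + 1 : 𝕜) ≠ 0 := Nat.cast_add_one_ne_zero _
  rw [← L.smul_mem_iff hne, ← vderiv_smul_linearVec_pow_mul]
  exact hL _ ha _ hb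

/-- Multiplication by `e • 1` lowers the exponent. -/
theorem DerivMulClosed.smul_linearVec_pow_mem_of_add (hL : DerivMulClosed L)
    (he : e • 1 ∈ L) (hae : a * e = a) {j i : ℕ}
    (h : a • linearVec r ^ (j + i) ∈ L) : a • linearVec r ^ j ∈ L := by
  induction i with
  | zero => exact h
  | succ i ih =>
    have hmul := hL.smul_linearVec_pow_mem (j := j + i) (k := 0) h (by rwa [pow_zero])
    rw [hae, add_zero] at hmul
    exact ih hmul

/-- The order-`k` Taylor term, cut down by `e`, is an eigenvector of `h ↦ (e (X - r) h)'` for the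
eigenvalue `k + 1`. -/
theorem DerivMulClosed.taylorCoeffVec_smul_mem [Finite ι] (hL : DerivMulClosed L)
    (he : e • linearVec r ∈ L) (hee : e * e = e) {h : ι → 𝕜[X]} (hh : h ∈ L) (k : ℕ) :
    (e * taylorCoeffVec r h k) • linearVec r ^ k ∈ L := by
  let T : Module.End 𝕜 (ι → 𝕜[X]) := vderiv ∘ₗ LinearMap.mulLeft 𝕜 (e • linearVec r)
  have hTL : ∀ y ∈ L, T y ∈ L := fun y hy => hL _ he y hy
  have hT : ∀ (j : ℕ) (b : ι → 𝕜),
      T (b • linearVec r ^ j) = (j + 1 : 𝕜) • ((e * b) • linearVec r ^ j) := fun j b => by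
    have := vderiv_smul_linearVec_pow_mul r e b 0 j
    rwa [zero_add, pow_one, zero_add] at this
  obtain ⟨N, hN, hkN⟩ := ((eventually_eq_sum_taylorCoeffVec r h).and
    (Filter.eventually_gt_atTop k)).exists
  have hTsum : T h = ∑ j ∈ Finset.range N,
      (j + 1 : 𝕜) • ((e * taylorCoeffVec r h j) • linearVec r ^ j) := by
    conv_lhs => rw [hN, map_sum]
    exact Finset.sum_congr rfl fun j _ => hT j _
  have hTh := hTL h hh
  rw [hTsum] at hTh
  have hne : (k + 1 : 𝕜) ≠ 0 := Nat.cast_add_one_ne_zero k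
  refine (L.smul_mem_iff hne).1
    (mem_of_sum_eigenvectors_mem hTL (μ := fun j : ℕ => (j + 1 : 𝕜)) ?_ ?_ hTh
      (Finset.mem_range.2 hkN))
  · exact fun i _ j _ hij => by simpa using hij
  · intro j _
    rw [map_smul, hT, ← mul_assoc, hee]

theorem DerivMulClosed.mem_multipliers [Finite ι] (hL : DerivMulClosed L)
    (he : e • linearVec r ∈ L) (hee : e * e = e) (ha : a • linearVec r ∈ L)
    (hae : a * e = a) : a ∈ multipliers L := by
  intro h hh
  obtain ⟨N, hN⟩ := (eventually_eq_sum_taylorCoeffVec r h).exists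
  rw [hN, Finset.smul_sum]
  refine L.sum_mem fun k _ => ?_
  have hmem := hL.smul_linearVec_pow_mem (j := 0) (by simpa using ha)
    (hL.taylorCoeffVec_smul_mem he hee hh k)
  rwa [zero_add, ← mul_assoc, hae, mul_smul] at hmem

/-- The components of slope `c` of an affine vector `g` form an eigenvector of `h ↦ (g h)'` for the
eigenvalue `2 c`. -/
theorem DerivMulClosed.indicator_slope_smul_mem [Finite ι] (hL : DerivMulClosed L)
    {g : ι → 𝕜[X]} (hg : g ∈ L) (hlin : ∀ u, (g u).natDegree ≤ 1) (w : ι) :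
    ({u | (g u).coeff 1 = (g w).coeff 1}.indicator 1 : ι → 𝕜) • g ∈ L := by
  have := Fintype.ofFinite ι
  let T : Module.End 𝕜 (ι → 𝕜[X]) := vderiv ∘ₗ LinearMap.mulLeft 𝕜 g
  let part : 𝕜 → ι → 𝕜[X] := fun c => ({u | (g u).coeff 1 = c}.indicator 1 : ι → 𝕜) • g
  refine mem_of_sum_eigenvectors_mem (T := T) (s := Finset.univ.image fun u => (g u).coeff 1)
    (μ := fun c => 2 * c) (x := part) (hL g hg) (fun a _ b _ hab => by simpa using hab) ?_ ?_
    (Finset.mem_image_of_mem _ (Finset.mem_univ w))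
  · intro c _
    ext1 u
    by_cases hu : (g u).coeff 1 = c
    · obtain ⟨m, hm⟩ : ∃ m, g u = C c * X + C m :=
        ⟨_, hu ▸ eq_X_add_C_of_natDegree_le_one (hlin u)⟩
      have hderiv : derivative (g u * g u) = (2 * c) • g u := by
        rw [hm, derivative_mul, smul_eq_C_mul, C_mul, C_ofNat]
        simp only [derivative_add, derivative_C_mul_X, derivative_C]
        ring
      simpa [T, part, hu] using hderiv
    · simp [T, part, hu]
  · convert hg using 1
    ext1 u
    simp [part, Finset.sum_apply, Set.indicator_apply, ite_smul]

/-- Dividing the components of slope `c ≠ 0` by `c` makes them monic, with roots `r`. -/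
theorem DerivMulClosed.exists_indicator_slope_smul_linearVec_mem [Finite ι]
    (hL : DerivMulClosed L) {g : ι → 𝕜[X]} (hg : g ∈ L) (hlin : ∀ u, (g u).natDegree ≤ 1) {w : ι}
    (hw : (g w).coeff 1 ≠ 0) :
    ∃ r : ι → 𝕜, (∀ u, (g u).coeff 1 = (g w).coeff 1 → (g u).eval (r u) = 0) ∧
      ({u | (g u).coeff 1 = (g w).coeff 1}.indicator 1 : ι → 𝕜) • linearVec r ∈ L := by
  set c := (g w).coeff 1
  have hgu : ∀ u, (g u).coeff 1 = c → g u = C c * X + C ((g u).coeff 0) := fun u hu =>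
    hu ▸ eq_X_add_C_of_natDegree_le_one (hlin u)
  refine ⟨fun u => -(g u).coeff 0 / c, fun u hu => ?_, (L.smul_mem_iff hw).1 ?_⟩
  · rw [hgu u hu]
    simp [mul_div_cancel₀ _ hw]
  · convert hL.indicator_slope_smul_mem hg hlin w using 1
    ext1 u
    by_cases hu : (g u).coeff 1 = c
    · have hscale : c • (X - C (-(g u).coeff 0 / c)) = g u := by
        rw [smul_eq_C_mul, mul_sub, ← C_mul, mul_div_cancel₀ _ hw, C_neg, sub_neg_eq_add]
        exact (hgu u hu).symm
      simpa [hu, c, linearVec] using hscale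
    · simp [hu, c]

theorem DerivMulClosed.indicator_slope_mem_multipliers [Finite ι] (hL : DerivMulClosed L)
    {g : ι → 𝕜[X]} (hg : g ∈ L) (hlin : ∀ u, (g u).natDegree ≤ 1) {w : ι}
    (hw : (g w).coeff 1 ≠ 0) :
    ({u | (g u).coeff 1 = (g w).coeff 1}.indicator 1 : ι → 𝕜) ∈ multipliers L := by
  obtain ⟨r, -, hr⟩ := hL.exists_indicator_slope_smul_linearVec_mem hg hlin hw
  exact hL.mem_multipliers hr indicator_one_mul_self hr indicator_one_mul_self

/-- Let `e` be the indicator of the components of `F` whose derivative of order `d` has a given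
slope `c ≠ 0`. The top Taylor term is a multiple of `e (X - r) ^ (d + 1)`, and multiplication by
it raises exponents, so that a term of order `k` can be brought to order one whenever
`d + k ≥ 1`. For `d = k = 0` the coefficient vanishes by the choice of `r`. -/
theorem DerivMulClosed.taylorCoeffVec_mem_multipliers [Finite ι] (hL : DerivMulClosed L)
    {F : ι → 𝕜[X]} (hF : ∀ k, vderiv^[k] F ∈ L) {d : ℕ} {S : Set ι} {c : 𝕜} (hc : c ≠ 0)
    (hS : ∀ u ∈ S, derivative^[d + 1] (F u) = C c)
    (hr : ∀ u ∈ S, (derivative^[d] (F u)).eval (r u) = 0)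
    (he : (S.indicator 1 : ι → 𝕜) • linearVec r ∈ L) (k : ℕ) :
    S.indicator 1 * taylorCoeffVec r F k ∈ multipliers L := by
  set e : ι → 𝕜 := S.indicator 1
  have hee : e * e = e := indicator_one_mul_self
  have hterm : ∀ k, (e * taylorCoeffVec r F k) • linearVec r ^ k ∈ L :=
    hL.taylorCoeffVec_smul_mem he hee (hF 0)
  have hone : e • (1 : ι → 𝕜[X]) ∈ L :=
    indicator_smul_one_mem (hL.mem_multipliers he hee he hee) (hF (d + 1)) hc fun u hu => by
      rw [vderiv_iterate_apply, hS u hu]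
  have htop : e • linearVec r ^ (d + 1) ∈ L := by
    rw [← L.smul_mem_iff hc]
    convert L.smul_mem ((d + 1).factorial : 𝕜) (hterm (d + 1)) using 1
    ext1 u
    by_cases hu : u ∈ S
    · have hcoeff : ((d + 1).factorial : 𝕜) * (taylor (r u) (F u)).coeff (d + 1) = c := by
        have := congrArg (eval (r u)) (hS u hu)
        rw [← factorial_smul_hasseDeriv] at this
        simpa [taylor_coeff] using this
      simp [e, hu, taylorCoeffVec, smul_smul, hcoeff]
    · simp [e, hu]
  have hcut : e * taylorCoeffVec r F k * e = e * taylorCoeffVec r F k := by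
    rw [mul_right_comm, hee]
  refine hL.mem_multipliers he hee ?_ hcut
  rcases Nat.eq_zero_or_pos (d + k) with hdk | hdk
  · obtain ⟨rfl, rfl⟩ : d = 0 ∧ k = 0 := by omega
    convert L.zero_mem using 1
    ext1 u
    by_cases hu : u ∈ S
    · simpa [e, hu, taylorCoeffVec, taylor_coeff_zero] using Or.inl (hr u hu)
    · simp [e, hu]
  · have hraise : (e * taylorCoeffVec r F k) • linearVec r ^ (1 + (d + k - 1)) ∈ L := by
      rw [Nat.add_sub_cancel' hdk]
      simpa only [← mul_assoc, hee] using hL.smul_linearVec_pow_mem htop (hterm k)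
    simpa using hL.smul_linearVec_pow_mem_of_add hone hcut hraise

theorem Unseparated.exists_eq_taylor_of_natDegree_le [Finite ι] (hL : DerivMulClosed L)
    {F : ι → 𝕜[X]} (hF : ∀ k, vderiv^[k] F ∈ L) {d : ℕ} (hd : ∀ u, (F u).natDegree ≤ d + 1)
    {v w : ι} (hv : (F v).natDegree = d + 1) (hvw : Unseparated (multipliers L) v w) :
    ∃ s, F w = taylor s (F v) := by
  set g := vderiv^[d] F with hg
  have hlin : ∀ u, (g u).natDegree ≤ 1 := fun u => by
    rw [hg, vderiv_iterate_apply]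
    have := natDegree_iterate_derivative (F u) d
    have := hd u
    omega
  have hslope : (g v).coeff 1 ≠ 0 := by
    rw [hg, vderiv_iterate_apply, coeff_iterate_derivative, nsmul_eq_mul, add_comm 1 d, ← hv]
    refine mul_ne_zero ?_ (leadingCoeff_ne_zero.2 fun h => ?_)
    · rw [Nat.cast_ne_zero, Ne, Nat.descFactorial_eq_zero_iff_lt]
      omega
    · simp [h] at hv
  obtain ⟨r, hr, he⟩ := hL.exists_indicator_slope_smul_linearVec_mem (hF d) hlin hslope
  set c := (g v).coeff 1
  set S := {u | (g u).coeff 1 = c}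
  have hvS : v ∈ S := rfl
  have hwS : w ∈ S := by
    by_contra hwS
    have hone : S.indicator (1 : ι → 𝕜) v = S.indicator 1 w :=
      hvw _ (hL.indicator_slope_mem_multipliers (hF d) hlin hslope)
    rw [Set.indicator_of_mem hvS, Set.indicator_of_notMem hwS] at hone
    exact one_ne_zero hone
  have hS : ∀ u ∈ S, derivative^[d + 1] (F u) = C c := by
    intro u hu
    rw [Function.iterate_succ_apply', ← vderiv_iterate_apply, ← hg,
      eq_X_add_C_of_natDegree_le_one (hlin u), show (g u).coeff 1 = c from hu]
    simp
  have htaylor : taylor (r w) (F w) = taylor (r v) (F v) := by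
    ext k
    have := hvw _ (hL.taylorCoeffVec_mem_multipliers hF hslope hS
      (fun u hu => by simpa [hg] using hr u hu) he k)
    simpa [hvS, hwS, taylorCoeffVec] using this.symm
  refine ⟨-r w + r v, ?_⟩
  rw [← taylor_taylor, ← htaylor, taylor_taylor, neg_add_cancel, taylor_zero]

/-- On an unseparated class, replace `F` by its restriction to the class, whose maximal degree is
attained within the class. -/
theorem Unseparated.exists_eq_taylor [Finite ι] (hL : DerivMulClosed L)
    {F : ι → 𝕜[X]} (hF : ∀ k, vderiv^[k] F ∈ L) (hdeg : ∀ u, F u = 0 ∨ 0 < (F u).natDegree)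
    {v w : ι} (hvw : Unseparated (multipliers L) v w) : ∃ s, F w = taylor s (F v) := by
  set S := {u | Unseparated (multipliers L) v u}
  have hvS : v ∈ S := fun _ _ => rfl
  have hS : (S.indicator 1 : ι → 𝕜) ∈ multipliers L :=
    indicator_one_mem_of_unseparated_closed fun _ hu _ => hu.trans
  set F' := (S.indicator 1 : ι → 𝕜) • F with hF'
  have hF'S : ∀ u ∈ S, F' u = F u := fun u hu => by simp [hF', hu]
  have hF'L : ∀ k, vderiv^[k] F' ∈ L := fun k => by
    rw [hF', vderiv_iterate_smul]
    exact hS _ (hF k)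
  have : Nonempty ι := ⟨v⟩
  obtain ⟨u, hu⟩ := Finite.exists_max fun u => (F' u).natDegree
  rcases Nat.eq_zero_or_pos (F' u).natDegree with hu0 | hu0
  · have hzero : ∀ x ∈ S, F x = 0 := fun x hx => (hdeg x).resolve_right <| by
      have := hu x
      rw [hF'S x hx] at this
      omega
    exact ⟨0, by rw [hzero w hvw, hzero v hvS, map_zero]⟩
  · have huS : u ∈ S := by
      by_contra h
      simp [hF', h] at hu0
    obtain ⟨d, hd⟩ := Nat.exists_eq_add_one.2 hu0
    have key : ∀ x ∈ S, ∃ s, F x = taylor s (F u) := fun x hx => by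
      rw [← hF'S x hx, ← hF'S u huS]
      exact exists_eq_taylor_of_natDegree_le hL hF'L (fun x => (hu x).trans hd.le) hd
        (huS.symm.trans hx)
    obtain ⟨s, hs⟩ := key v hvS
    obtain ⟨t, ht⟩ := key w hvw
    refine ⟨t - s, ?_⟩
    rw [hs, ht, taylor_taylor, sub_add_cancel]

/-- The derivative of `F c₀` of order `deg (F c₀ v)` is a nonzero constant on the translation class
of `v`. -/
theorem indicator_translationClass_smul_one_mem [Finite ι] (hL : DerivMulClosed L) {κ : Type*}
    {F : κ → ι → 𝕜[X]} (hF : ∀ c k, vderiv^[k] (F c) ∈ L)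
    (hdeg : ∀ c u, F c u = 0 ∨ 0 < (F c u).natDegree) {c₀ : κ} {v : ι} (hv : F c₀ v ≠ 0) :
    ({w | ∀ c, ∃ s, F c w = taylor s (F c v)}.indicator 1 : ι → 𝕜) • (1 : ι → 𝕜[X]) ∈ L := by
  set S := {w | ∀ c, ∃ s, F c w = taylor s (F c v)}
  have hS : (S.indicator 1 : ι → 𝕜) ∈ multipliers L := by
    refine indicator_one_mem_of_unseparated_closed fun u hu w huw c => ?_
    obtain ⟨s, hs⟩ := hu c
    obtain ⟨t, ht⟩ := huw.exists_eq_taylor hL (hF c) (hdeg c)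
    exact ⟨t + s, by rw [ht, hs, taylor_taylor]⟩
  set n := (F c₀ v).natDegree
  have ha : (n.factorial : 𝕜) * (F c₀ v).leadingCoeff ≠ 0 :=
    mul_ne_zero (Nat.cast_ne_zero.2 n.factorial_ne_zero) (leadingCoeff_ne_zero.2 hv)
  have hconst : derivative^[n] (F c₀ v) = C (n.factorial * (F c₀ v).leadingCoeff) := by
    rw [eq_C_of_natDegree_le_zero ((natDegree_iterate_derivative _ _).trans_eq (Nat.sub_self n)),
      coeff_iterate_derivative, zero_add, Nat.descFactorial_self, nsmul_eq_mul, leadingCoeff]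
  refine indicator_smul_one_mem hS (hF c₀ n) ha fun w hw => ?_
  obtain ⟨s, hs⟩ := hw c₀
  rw [vderiv_iterate_apply, hs, iterate_derivative_taylor, hconst, taylor_C]

end CharZero

end Field

/-! ### Brackets of momentum fields -/

section Fields

variable {V : Type}

/-- The coordinate `q_v`. -/
def position (v : V) : Phase V →L[ℝ] ℝ :=
  (ContinuousLinearMap.proj v).comp (ContinuousLinearMap.fst ℝ (V → ℝ) (V → ℝ))

/-- The coordinate `p_v`. -/
def momentum (v : V) : Phase V →L[ℝ] ℝ :=
  (ContinuousLinearMap.proj v).comp (ContinuousLinearMap.snd ℝ (V → ℝ) (V → ℝ))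

@[simp]
theorem position_apply (v : V) (x : Phase V) : position v x = x.1 v :=
  rfl

@[simp]
theorem momentum_apply (v : V) (x : Phase V) : momentum v x = x.2 v :=
  rfl

theorem hasFDerivAt_eval_comp {E : Type*} [NormedAddCommGroup E] [NormedSpace ℝ E] (p : ℝ[X])
    (f : E →L[ℝ] ℝ) (x : E) :
    HasFDerivAt (fun y => p.eval (f y)) ((derivative p).eval (f x) • f) x :=
  (p.hasDerivAt (f x)).comp_hasFDerivAt x f.hasFDerivAt

/-- The vector field `∑_v g_v(q_v) ∂_{p_v}`, as a linear function of the vector `g`. -/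
def momentumField : (V → ℝ[X]) →ₗ[ℝ] Phase V → Phase V where
  toFun g x := (0, fun v => (g v).eval (x.1 v))
  map_add' g h := by ext <;> simp
  map_smul' a g := by ext <;> simp

theorem momentumField_apply (g : V → ℝ[X]) (x : Phase V) :
    momentumField g x = (0, fun v => (g v).eval (x.1 v)) :=
  rfl

/-- The vector field `∑_v g_v(q_v - q_c) ∂_{p_v}`. -/
def relativeField (c : V) (g : V → ℝ[X]) : Phase V → Phase V :=
  fun x => (0, fun v => (g v).eval (x.1 v - x.1 c))

/-- The second derivatives `V''_{wc}` of the interactions of `c` with its neighbors `w`, as a vector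
indexed by all vertices. -/
def coupling (G : SimpleGraph V) [DecidableRel G.Adj] (Vp : V → V → ℝ[X]) (c : V) : V → ℝ[X] :=
  fun w => if G.Adj w c then derivative (derivative (Vp w c)) else 0

@[simp]
theorem coupling_self (G : SimpleGraph V) [DecidableRel G.Adj] (Vp : V → V → ℝ[X]) (c : V) :
    coupling G Vp c c = 0 := by
  simp [coupling]

variable [Finite V]

theorem hasFDerivAt_momentumField (g : V → ℝ[X]) (x : Phase V) :
    HasFDerivAt (momentumField g) ((0 : Phase V →L[ℝ] V → ℝ).prod
      (ContinuousLinearMap.pi fun v => (derivative (g v)).eval (x.1 v) • position v)) x :=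
  have := Fintype.ofFinite V
  (hasFDerivAt_const 0 x).prodMk
    (hasFDerivAt_pi.2 fun v => hasFDerivAt_eval_comp (g v) (position v) x)

theorem hasFDerivAt_relativeField (c : V) (g : V → ℝ[X]) (x : Phase V) :
    HasFDerivAt (relativeField c g) ((0 : Phase V →L[ℝ] V → ℝ).prod
      (ContinuousLinearMap.pi fun v =>
        (derivative (g v)).eval (x.1 v - x.1 c) • (position v - position c))) x :=
  have := Fintype.ofFinite V
  (hasFDerivAt_const 0 x).prodMk
    (hasFDerivAt_pi.2 fun v => hasFDerivAt_eval_comp (g v) (position v - position c) x)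

/-- Taylor's formula `g_v(q_v) = ∑_k q_c^k / k! * g_v^{(k)}(q_v - q_c)`. -/
theorem exists_momentumField_eq_sum_relativeField (c : V) (g : V → ℝ[X]) :
    ∃ N, momentumField g = ∑ k ∈ Finset.range N, fun x : Phase V =>
      (x.1 c ^ k / k.factorial) • relativeField c (vderiv^[k] g) x := by
  obtain ⟨M, hM⟩ := Finite.exists_le fun v => (g v).natDegree
  refine ⟨M + 1, funext fun x => ?_⟩
  rw [Finset.sum_apply]
  refine Prod.ext (by simp [momentumField_apply, relativeField, Prod.fst_sum]) (funext fun v => ?_)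
  have hdeg : (taylor (x.1 v - x.1 c) (g v)).natDegree < M + 1 := by
    rw [natDegree_taylor]
    exact Nat.lt_succ_of_le (hM v)
  have htaylor := taylor_eval (x.1 v - x.1 c) (g v) (x.1 c)
  rw [add_sub_cancel, eval_eq_sum_range' hdeg] at htaylor
  simp only [momentumField_apply, relativeField, Prod.snd_sum, Prod.smul_snd, Finset.sum_apply,
    Pi.smul_apply, smul_eq_mul, vderiv_iterate_apply, ← htaylor, taylor_coeff]
  refine Finset.sum_congr rfl fun k _ => ?_
  rw [← factorial_smul_hasseDeriv, LinearMap.smul_apply, eval_smul, nsmul_eq_mul, ← mul_assoc,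
    div_mul_cancel₀ _ (Nat.cast_ne_zero.2 k.factorial_ne_zero), mul_comm]

end Fields

section Brackets

variable {V : Type} [Fintype V] [DecidableEq V]

theorem momentumField_single (c : V) (p : ℝ[X]) :
    momentumField (Pi.single c p) = fun x => p.eval (x.1 c) • dp c x := by
  funext x
  refine Prod.ext (by simp [momentumField_apply, dp]) (funext fun v => ?_)
  obtain rfl | hv := eq_or_ne v c
  · simp [momentumField_apply, dp]
  · simp [momentumField_apply, dp, hv]

theorem momentumField_single_one (c : V) : momentumField (Pi.single c 1) = dp c := by
  simp [momentumField_single]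

theorem lieB_dq (c : V) (Z : Phase V → Phase V) :
    lieB (dq c) Z = fun x => fderiv ℝ Z x (Pi.single c 1, 0) := by
  funext x
  have hconst : fderiv ℝ (dq c) x = 0 := fderiv_const_apply _
  simp [lieB, hconst, dq]

theorem lieB_dq_relativeField {c : V} {g : V → ℝ[X]} (hgc : g c = 0) :
    lieB (dq c) (relativeField c g) = -relativeField c (vderiv g) := by
  rw [lieB_dq]
  funext x
  rw [(hasFDerivAt_relativeField c g x).fderiv]
  refine Prod.ext (by simp [relativeField]) (funext fun v => ?_)
  obtain rfl | hv := eq_or_ne v c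
  · simp [relativeField, hgc]
  · simp [relativeField, hv]

variable (G : SimpleGraph V) [DecidableRel G.Adj] (γ : V → ℝ) {U : V → ℝ → ℝ}
  (Vp : V → V → ℝ[X])

theorem contDiff_X0 (hU : ∀ v, ContDiff ℝ (⊤ : ℕ∞) (U v)) :
    ContDiff ℝ (⊤ : ℕ∞) (X0 G γ U Vp) := by
  have hV : ∀ v w, ContDiff ℝ (⊤ : ℕ∞) fun y => (derivative (Vp v w)).eval y := fun v w => by
    simpa using (derivative (Vp v w)).contDiff_aeval (𝕜 := ℝ) _
  unfold X0
  fun_prop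

theorem hasFDerivAt_X0 (hU : ∀ v, ContDiff ℝ (⊤ : ℕ∞) (U v)) (x : Phase V) :
    HasFDerivAt (X0 G γ U Vp) ((ContinuousLinearMap.snd ℝ (V → ℝ) (V → ℝ)).prod
      (ContinuousLinearMap.pi fun v =>
        (-γ v) • momentum v - deriv (deriv (U v)) (x.1 v) • position v -
          ∑ w with G.Adj v w, (derivative (derivative (Vp v w))).eval (x.1 v - x.1 w) •
            (position v - position w))) x := by
  have hdU : ∀ v, DifferentiableAt ℝ (deriv (U v)) (x.1 v) := fun v =>
    (contDiff_infty_iff_deriv.1 (hU v)).2.contDiffAt.differentiableAt (by simp)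
  refine hasFDerivAt_snd.prodMk (hasFDerivAt_pi.2 fun v => ?_)
  exact (((momentum v).hasFDerivAt.const_mul (-γ v)).sub
    ((hdU v).hasDerivAt.comp_hasFDerivAt x (position v).hasFDerivAt)).sub
      (HasFDerivAt.fun_sum fun w _ =>
        hasFDerivAt_eval_comp (derivative (Vp v w)) (position v - position w) x)

theorem lieB_momentumField_X0 (hU : ∀ v, ContDiff ℝ (⊤ : ℕ∞) (U v)) (g : V → ℝ[X]) :
    lieB (momentumField g) (X0 G γ U Vp) = fun x =>
      (fun v => (g v).eval (x.1 v),
        fun v => -(γ v) * (g v).eval (x.1 v) - (derivative (g v)).eval (x.1 v) * x.2 v) := by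
  funext x
  rw [lieB, (hasFDerivAt_X0 G γ Vp hU x).fderiv, (hasFDerivAt_momentumField g x).fderiv]
  ext <;> simp [momentumField_apply, X0]

/-- Friction and forces drop out of the double bracket. -/
theorem lieB_lieB_momentumField_X0 (hU : ∀ v, ContDiff ℝ (⊤ : ℕ∞) (U v)) (g h : V → ℝ[X]) :
    lieB (lieB (momentumField g) (X0 G γ U Vp)) (momentumField h) =
      momentumField (vderiv (g * h)) := by
  rw [lieB_momentumField_X0 G γ Vp hU g]
  funext x
  have hbracket := HasFDerivAt.prodMk
    (hasFDerivAt_pi.2 fun v => hasFDerivAt_eval_comp (g v) (position v) x)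
    (hasFDerivAt_pi.2 fun v =>
      ((hasFDerivAt_eval_comp (g v) (position v) x).const_mul (-γ v)).fun_sub
        ((hasFDerivAt_eval_comp (derivative (g v)) (position v) x).fun_mul
          (momentum v).hasFDerivAt))
  simp only [position_apply, momentum_apply] at hbracket
  rw [lieB, (hasFDerivAt_momentumField h x).fderiv, hbracket.fderiv]
  ext v
  · simp [momentumField_apply]
  · simp only [momentumField_apply, Prod.snd_sub, Pi.sub_apply, ContinuousLinearMap.prod_apply,
      ContinuousLinearMap.coe_pi', sub_apply, add_apply, smul_apply, position_apply,
      momentum_apply, smul_eq_mul, Pi.zero_apply, vderiv_apply, Pi.mul_apply, derivative_mul,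
      eval_add, eval_mul]
    ring

theorem lieB_dq_X0_sub_smul_dp (hU : ∀ v, ContDiff ℝ (⊤ : ℕ∞) (U v)) (c : V) :
    (lieB (dq c) (X0 G γ U Vp) - fun x => (lieB (dq c) (X0 G γ U Vp) x).2 c • dp c x) =
      relativeField c (coupling G Vp c) := by
  rw [lieB_dq]
  funext x
  simp only [Pi.sub_apply]
  rw [(hasFDerivAt_X0 G γ Vp hU x).fderiv]
  refine Prod.ext (by simp [relativeField, dp]) (funext fun v => ?_)
  obtain rfl | hv := eq_or_ne v c
  · simp [relativeField, dp]
  · simp [relativeField, dp, hv, coupling, Pi.single_apply, apply_ite (eval _)]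

end Brackets

/-! ### Controllability -/

section Controllability

variable {V : Type} [Fintype V] [DecidableEq V] {Vstar : Finset V} {X : Phase V → Phase V}

theorem MM.zero {Y : Phase V → Phase V} (hY : MM Vstar X Y) : MM Vstar X 0 := by
  simpa using hY.smul 0

/-- `𝓜` as a linear subspace. As generated, `𝓜` is empty when `V*` is, and then misses `0`. -/
def MM.toSubmodule (h0 : MM Vstar X 0) : Submodule ℝ (Phase V → Phase V) where
  carrier := {Y | MM Vstar X Y}
  zero_mem' := h0
  add_mem' := MM.add
  smul_mem' a _ := MM.smul a

/-- The space of polynomial vectors whose momentum field belongs to `𝓜`. -/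
def momentumModule (h0 : MM Vstar X 0) : Submodule ℝ (V → ℝ[X]) :=
  (MM.toSubmodule h0).comap momentumField

theorem mem_momentumModule {h0 : MM Vstar X 0} {g : V → ℝ[X]} :
    g ∈ momentumModule h0 ↔ MM Vstar X (momentumField g) :=
  Iff.rfl

theorem single_mem_momentumModule {h0 : MM Vstar X 0} {c : V} (hc : MM Vstar X (dp c))
    (p : ℝ[X]) : Pi.single c p ∈ momentumModule h0 := by
  rw [mem_momentumModule, momentumField_single]
  refine MM.mulS _ ?_ hc
  have hp : ContDiff ℝ (⊤ : ℕ∞) fun y => p.eval y := by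
    simpa using p.contDiff_aeval (𝕜 := ℝ) _
  fun_prop

theorem compl_indicator_one_mem_multipliers {h0 : MM Vstar X 0} {C : Finset V}
    (hC : ∀ c ∈ C, MM Vstar X (dp c)) :
    (C : Set V)ᶜ.indicator 1 ∈ multipliers (momentumModule h0) := by
  intro h hh
  convert (momentumModule h0).sub_mem hh ((momentumModule h0).sum_mem fun c hc =>
    single_mem_momentumModule (hC c hc) (h c)) using 1
  ext1 v
  by_cases hv : v ∈ C <;> simp [hv, Finset.sum_apply, Pi.single_apply]

theorem MM.relativeField_iterate {c : V} {g : V → ℝ[X]} (hgc : g c = 0) (hc : MM Vstar X (dq c))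
    (hg : MM Vstar X (relativeField c g)) (k : ℕ) :
    MM Vstar X (relativeField c (vderiv^[k] g)) := by
  induction k with
  | zero => exact hg
  | succ k ih =>
    have hgkc : vderiv^[k] g c = 0 := by rw [vderiv_iterate_apply, hgc, iterate_derivative_zero]
    have hbracket := (hc.lie ih).smul (-1)
    rwa [lieB_dq_relativeField hgkc, neg_one_smul, neg_neg,
      ← Function.iterate_succ_apply' vderiv] at hbracket

theorem mem_momentumModule_of_relativeField {h0 : MM Vstar X 0} {c : V} {g : V → ℝ[X]}
    (hgc : g c = 0) (hc : MM Vstar X (dq c)) (hg : MM Vstar X (relativeField c g)) :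
    g ∈ momentumModule h0 := by
  obtain ⟨N, hN⟩ := exists_momentumField_eq_sum_relativeField c g
  rw [mem_momentumModule, hN]
  refine (MM.toSubmodule h0).sum_mem fun k _ => ?_
  exact MM.mulS (fun x => x.1 c ^ k / k.factorial) (by fun_prop)
    (hc.relativeField_iterate hgc hg k)

variable {G : SimpleGraph V} [DecidableRel G.Adj] {γ : V → ℝ} {U : V → ℝ → ℝ} {Vp : V → V → ℝ[X]}

theorem derivMulClosed_momentumModule (hU : ∀ v, ContDiff ℝ (⊤ : ℕ∞) (U v))
    (h0 : MM Vstar (X0 G γ U Vp) 0) : DerivMulClosed (momentumModule h0) := fun g hg h hh => by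
  rw [mem_momentumModule, ← lieB_lieB_momentumField_X0 G γ Vp hU]
  exact (MM.lieX hg).lie hh

theorem MM.relativeField_coupling (hU : ∀ v, ContDiff ℝ (⊤ : ℕ∞) (U v)) {c : V}
    (hc : Controllable Vstar (X0 G γ U Vp) c) :
    MM Vstar (X0 G γ U Vp) (relativeField c (coupling G Vp c)) := by
  have hsmooth : ContDiff ℝ (⊤ : ℕ∞) fun x => (lieB (dq c) (X0 G γ U Vp) x).2 c := by
    have := (contDiff_X0 G γ Vp hU).fderiv_right (m := (⊤ : ℕ∞)) (by simp)
    rw [lieB_dq]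
    fun_prop
  rw [← lieB_dq_X0_sub_smul_dp G γ Vp hU]
  exact (MM.toSubmodule hc.1.zero).sub_mem hc.1.lieX (MM.mulS _ hsmooth hc.2)

theorem vderiv_iterate_coupling_mem_momentumModule (hU : ∀ v, ContDiff ℝ (⊤ : ℕ∞) (U v))
    {h0 : MM Vstar (X0 G γ U Vp) 0} {c : V} (hc : Controllable Vstar (X0 G γ U Vp) c) (k : ℕ) :
    vderiv^[k] (coupling G Vp c) ∈ momentumModule h0 :=
  mem_momentumModule_of_relativeField (by simp) hc.1
    (hc.1.relativeField_iterate (coupling_self G Vp c) (MM.relativeField_coupling hU hc) k)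

/-- `[∂_{p_v}, X₀] = ∂_{q_v} - γ_v ∂_{p_v}`. -/
theorem controllable_of_dp (hU : ∀ v, ContDiff ℝ (⊤ : ℕ∞) (U v)) {v : V}
    (hv : MM Vstar (X0 G γ U Vp) (dp v)) : Controllable Vstar (X0 G γ U Vp) v := by
  refine ⟨?_, hv⟩
  convert hv.lieX.add (hv.smul (γ v)) using 1
  nth_rw 1 [← momentumField_single_one, lieB_momentumField_X0 G γ Vp hU]
  ext x w
  · obtain rfl | hw := eq_or_ne w v <;> simp [dq, dp, *]
  · obtain rfl | hw := eq_or_ne w v <;> simp [dq, dp, *]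

end Controllability

section Coupling

variable {V : Type} {G : SimpleGraph V} [DecidableRel G.Adj] {Vp : V → V → ℝ[X]}

theorem natDegree_coupling_pos {c w : V} (hw : G.Adj w c) (hdeg : 3 ≤ (Vp w c).natDegree) :
    0 < (coupling G Vp c w).natDegree := by
  simp only [coupling, hw, if_true, natDegree_derivative]
  omega

theorem coupling_ne_zero_iff {c : V} (hdeg : ∀ w, G.Adj w c → 3 ≤ (Vp w c).natDegree) {w : V} :
    coupling G Vp c w ≠ 0 ↔ G.Adj w c := by
  refine ⟨fun h => ?_, fun hw => ne_zero_of_natDegree_gt (natDegree_coupling_pos hw (hdeg w hw))⟩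
  by_contra hw
  simp [coupling, hw] at h

theorem coupling_eq_zero_or_natDegree_pos {c : V}
    (hdeg : ∀ w, G.Adj w c → 3 ≤ (Vp w c).natDegree) (w : V) :
    coupling G Vp c w = 0 ∨ 0 < (coupling G Vp c w).natDegree := by
  refine or_iff_not_imp_left.2 fun h => ?_
  have hw := (coupling_ne_zero_iff hdeg).1 h
  exact natDegree_coupling_pos hw (hdeg w hw)

theorem eval_derivative_derivative_of_eval_neg {R : Type*} [CommRing R] [IsDomain R] [Infinite R]
    {p q : R[X]} (h : ∀ x, p.eval x = q.eval (-x)) (x : R) :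
    (derivative (derivative p)).eval x = (derivative (derivative q)).eval (-x) := by
  have hpq : p = q.comp (-X) := Polynomial.funext fun x => by simp [h x]
  simp [hpq, derivative_comp]

theorem cEquiv_of_coupling_eq_taylor
    (hsym : ∀ u v, G.Adj u v → ∀ x : ℝ, (Vp v u).eval x = (Vp u v).eval (-x)) {C : Finset V}
    (hdeg : ∀ c ∈ C, ∀ w, G.Adj w c → 3 ≤ (Vp w c).natDegree) {v w : V}
    (h : ∀ c ∈ C, ∃ s, coupling G Vp c w = taylor s (coupling G Vp c v)) :
    CEquiv G Vp C w v := by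
  refine ⟨fun c hc => ?_, fun c hc hcw hcv => ?_⟩ <;> obtain ⟨s, hs⟩ := h c hc
  · rw [G.adj_comm c w, G.adj_comm c v, ← coupling_ne_zero_iff (hdeg c hc),
      ← coupling_ne_zero_iff (hdeg c hc), hs, Ne, taylor_eq_zero]
  · simp only [coupling, hcw.symm, hcv.symm, if_true] at hs
    refine ⟨-s, fun x => ?_⟩
    rw [eval_derivative_derivative_of_eval_neg (hsym w c hcw.symm),
      eval_derivative_derivative_of_eval_neg (hsym v c hcv.symm), hs, taylor_eval, neg_add, neg_neg]

end Coupling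

theorem controllable_of_alone_in_CEquiv_class_general
    {V : Type} [Fintype V] [DecidableEq V] (G : SimpleGraph V) [DecidableRel G.Adj]
    (Vstar : Finset V) (γ : V → ℝ) (U : V → ℝ → ℝ) (Vp : V → V → Polynomial ℝ)
    (hU : ∀ v, ContDiff ℝ (⊤ : ℕ∞) (U v))
    (hsym : ∀ u v, G.Adj u v → ∀ x : ℝ, (Vp v u).eval x = (Vp u v).eval (-x))
    (C : Finset V) (hdeg : ∀ c ∈ C, ∀ w, G.Adj w c → 3 ≤ (Vp w c).natDegree)
    (hC : ∀ c ∈ C, Controllable Vstar (X0 G γ U Vp) c)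
    (v : V) (hv : v ∈ NC G C)
    (halone : ∀ w ∈ NC G C, CEquiv G Vp C w v → w = v) :
    Controllable Vstar (X0 G γ U Vp) v := by
  obtain ⟨hvC, c₀, hc₀, hadj⟩ : v ∉ C ∧ ∃ c ∈ C, G.Adj c v := by simpa [NC] using hv
  have h0 := (hC c₀ hc₀).1.zero
  have hclass : ∀ w ∉ C,
      (∀ c ∈ C, ∃ s, coupling G Vp c w = taylor s (coupling G Vp c v)) ↔ w = v := by
    refine fun w hwC => ⟨fun hw => ?_, fun hw c _ => ⟨0, by rw [hw, taylor_zero]⟩⟩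
    have hwv := cEquiv_of_coupling_eq_taylor hsym hdeg hw
    refine halone w ?_ hwv
    simpa [NC] using ⟨hwC, c₀, hc₀, (hwv.1 c₀ hc₀).2 hadj⟩
  have hmem := compl_indicator_one_mem_multipliers (fun c hc => (hC c hc).2) _
    (indicator_translationClass_smul_one_mem (derivMulClosed_momentumModule hU h0)
      (F := fun c : C => coupling G Vp c)
      (fun c => vderiv_iterate_coupling_mem_momentumModule hU (hC c c.2))
      (fun c => coupling_eq_zero_or_natDegree_pos (hdeg c c.2))
      (c₀ := ⟨c₀, hc₀⟩) ((coupling_ne_zero_iff (hdeg c₀ hc₀)).2 hadj.symm))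
  refine controllable_of_dp hU ?_
  rw [← momentumField_single_one, ← mem_momentumModule (h0 := h0)]
  convert hmem using 1
  ext1 w
  by_cases hw : w ∈ C
  · simp [hw, ne_of_mem_of_not_mem hw hvC]
  · simp [hw, Set.indicator_apply, hclass w hw, Pi.single_apply]

/-- Corollary 5.5. Let `C` be a set of controllable vertices. If a
vertex `v ∈ N(C)` is alone in its `C`-equivalence class, then `v` is controllable. -/
theorem controllable_of_alone_in_CEquiv_class
    {V : Type} [Fintype V] [DecidableEq V] (G : SimpleGraph V) [DecidableRel G.Adj]
    (Vstar : Finset V) (γ : V → ℝ) (U : V → ℝ → ℝ) (Vp : V → V → Polynomial ℝ)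
    (hγpos : ∀ v ∈ Vstar, 0 < γ v) (hγ0 : ∀ v ∉ Vstar, γ v = 0)
    (hU : ∀ v, ContDiff ℝ (⊤ : ℕ∞) (U v))
    (hsym : ∀ u v, G.Adj u v → ∀ x : ℝ, (Vp v u).eval x = (Vp u v).eval (-x))
    (hdeg : ∀ u v, G.Adj u v → 3 ≤ (Vp u v).natDegree)
    (C : Finset V) (hC : ∀ c ∈ C, Controllable Vstar (X0 G γ U Vp) c)
    (v : V) (hv : v ∈ NC G C)
    (halone : ∀ w ∈ NC G C, CEquiv G Vp C w v → w = v) :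
    Controllable Vstar (X0 G γ U Vp) v :=
  controllable_of_alone_in_CEquiv_class_general G Vstar γ U Vp hU hsym C
    (fun c _ w hw => hdeg w c hw) hC v hv halone
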